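/- There is an absolute constant C > 0 such that for all k, s ∈ ℝ and all N ≥ 0, the function g_{k,s}(x) = e^{-(x−s)²/2 + i k x} satisfies ‖g_{k,s} − Π̂_N g_{k,s}‖ ≤ C · (1/√((N+1)!)) · ((k² + s²)/2)^{(N+1)/2}, where ‖·‖ is the L²(ℝ) norm. -/

import Mathlib

open MeasureTheory Real
noncomputable section
def physHermite : ℕ → ℝ → ℝ
  | 0 => fun _ => 1
  | 1 => fun x => 2 * x
  | n + 2 => fun x => 2 * x * physHermite (n + 1) x - 2 * (n + 1) * physHermite n x
def hermiteFun (n : ℕ) (x : ℝ) : ℝ :=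
  (Real.sqrt (Real.sqrt Real.pi))⁻¹ * (Real.sqrt (2 ^ n * Nat.factorial n))⁻¹ *
    Real.exp (-x ^ 2 / 2) * physHermite n x
def L2norm {E : Type*} [NormedAddCommGroup E] (f : ℝ → E) : ℝ :=
  Real.sqrt (∫ x : ℝ, ‖f x‖ ^ 2)
def scaledHermite (β : ℝ) (n : ℕ) (x : ℝ) : ℝ :=
  Real.sqrt β * hermiteFun n (β * x)
def hermiteProj (β : ℝ) (N : ℕ) (u : ℝ → ℂ) (x : ℝ) : ℂ :=
  ∑ n ∈ Finset.range (N + 1),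
    (∫ y : ℝ, u y * (scaledHermite β n y : ℂ)) * (scaledHermite β n x : ℂ)
def gks (k s : ℝ) (x : ℝ) : ℂ :=
  Complex.exp (-((x : ℂ) - (s : ℂ)) ^ 2 / 2 + Complex.I * (k : ℂ) * (x : ℂ))

/-!
Multiplying by `e^{x²/2}` turns `g_{k,s}` into a multiple of the exponential `e^{zx}`, `z = s + ik`.
Since `e^{-x²} Hₙ` is, up to sign, the `n`-th derivative of `e^{-x²}`, integrating by parts `n`
times gives the Hermite coefficients of `g_{k,s}` in closed form, as well as the orthonormality of
the Hermite functions. With `r = (k² + s²)/2 = |z|²/2`, the squared moduli of these coefficients are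
`√π` times the Poisson weights `e^{-r} rⁿ/n!`, while `‖g_{k,s}‖² = √π`. By Pythagoras the squared
projection error is exactly `√π` times the Poisson tail beyond `N`, which is at most
`r^{N+1}/(N+1)!` because `N! n! ≤ (N + n)!`.
-/

open Asymptotics Filter

lemma toLp_sum_smul {𝕜 E ι α : Type*} [NormedField 𝕜] [NormedAddCommGroup E] [NormedSpace 𝕜 E]
    {mα : MeasurableSpace α} {μ : Measure α} {p : ENNReal} {φ : ι → α → E}
    (hφ : ∀ i, MemLp (φ i) p μ) (c : ι → 𝕜) (s : Finset ι) :
    (memLp_finsetSum s fun i _ => (hφ i).const_smul (c i)).toLp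
      = ∑ i ∈ s, c i • (hφ i).toLp (φ i) := by
  refine Lp.ext ((MemLp.coeFn_toLp _).trans ?_)
  have coe_smul (i : ι) : c i • φ i =ᵐ[μ] ⇑(c i • (hφ i).toLp (φ i)) :=
    ((hφ i).const_smul (c i)).coeFn_toLp.symm
  filter_upwards [Lp.coeFn_finsetSum s fun i => c i • (hφ i).toLp (φ i),
    s.eventually_all.2 fun i _ => coe_smul i] with x sum_apply smul_apply
  rw [sum_apply]
  simpa using Finset.sum_congr rfl smul_apply

section Orthonormal

variable {𝕜 E ι : Type*} [RCLike 𝕜] [NormedAddCommGroup E] [InnerProductSpace 𝕜 E]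

lemma norm_sub_sum_inner_smul_sq {v : ι → E} (hv : Orthonormal 𝕜 v) (x : E) (s : Finset ι) :
    ‖x - ∑ i ∈ s, inner 𝕜 (v i) x • v i‖ ^ 2 = ‖x‖ ^ 2 - ∑ i ∈ s, ‖inner 𝕜 (v i) x‖ ^ 2 := by
  have inner_sum_eq : inner 𝕜 x (∑ i ∈ s, inner 𝕜 (v i) x • v i)
      = ((∑ i ∈ s, ‖inner 𝕜 (v i) x‖ ^ 2 : ℝ) : 𝕜) := by
    simp only [inner_sum, inner_smul_right, map_sum, RCLike.ofReal_pow, ← RCLike.mul_conj,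
      inner_conj_symm]
  have norm_sum_sq : ‖∑ i ∈ s, inner 𝕜 (v i) x • v i‖ ^ 2 = ∑ i ∈ s, ‖inner 𝕜 (v i) x‖ ^ 2 := by
    rw [@norm_sq_eq_re_inner 𝕜, hv.inner_sum, map_sum]
    exact Finset.sum_congr rfl fun i _ => by rw [RCLike.conj_mul]; norm_cast
  rw [@norm_sub_sq 𝕜, inner_sum_eq, norm_sum_sq, RCLike.ofReal_re]
  ring

variable {α : Type*} {mα : MeasurableSpace α} {μ : Measure α}

lemma norm_toLp_two_sq {f : α → E} (hf : MemLp f 2 μ) :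
    ‖hf.toLp f‖ ^ 2 = ∫ x, ‖f x‖ ^ 2 ∂μ := by
  rw [Lp.norm_toLp, toReal_eLpNorm hf.1, lpNorm_eq_integral_norm_rpow_toReal two_ne_zero
    ENNReal.ofNat_ne_top hf.1, ENNReal.toReal_ofNat, ← one_div, ← sqrt_eq_rpow]
  simp only [rpow_two]
  exact sq_sqrt (by positivity)

lemma inner_toLp_two {f g : α → E} (hf : MemLp f 2 μ) (hg : MemLp g 2 μ) :
    inner 𝕜 (hf.toLp f) (hg.toLp g) = ∫ x, inner 𝕜 (f x) (g x) ∂μ := by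
  rw [L2.inner_def]
  refine integral_congr_ae ?_
  filter_upwards [hf.coeFn_toLp, hg.coeFn_toLp] with x hfx hgx
  rw [hfx, hgx]

lemma integral_norm_sub_sum_integral_inner_smul_sq {φ : ι → α → E} (hφ : ∀ i, MemLp (φ i) 2 μ)
    (orthonormal : Orthonormal 𝕜 fun i => (hφ i).toLp (φ i)) {u : α → E} (hu : MemLp u 2 μ)
    (s : Finset ι) :
    ∫ x, ‖u x - ∑ i ∈ s, (∫ y, inner 𝕜 (φ i y) (u y) ∂μ) • φ i x‖ ^ 2 ∂μ
      = (∫ x, ‖u x‖ ^ 2 ∂μ) - ∑ i ∈ s, ‖∫ y, inner 𝕜 (φ i y) (u y) ∂μ‖ ^ 2 := by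
  have hsum : MemLp (fun x => ∑ i ∈ s, (∫ y, inner 𝕜 (φ i y) (u y) ∂μ) • φ i x) 2 μ :=
    memLp_finsetSum s fun i _ => (hφ i).const_smul _
  have toLp_residual : (hu.sub hsum).toLp _
      = hu.toLp u - ∑ i ∈ s, inner 𝕜 ((hφ i).toLp (φ i)) (hu.toLp u) • (hφ i).toLp (φ i) := by
    simp only [inner_toLp_two]
    rw [← toLp_sum_smul]
    rfl
  have pythagoras := norm_sub_sum_inner_smul_sq orthonormal (hu.toLp u) s
  rw [← toLp_residual, norm_toLp_two_sq, norm_toLp_two_sq] at pythagoras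
  simpa only [inner_toLp_two, Pi.sub_apply] using pythagoras

end Orthonormal

lemma exp_sub_sum_range_le {r : ℝ} (hr : 0 ≤ r) (N : ℕ) :
    exp r - ∑ n ∈ Finset.range N, r ^ n / n.factorial ≤ r ^ N / N.factorial * exp r := by
  have exp_series : HasSum (fun n : ℕ => r ^ n / n.factorial) (exp r) := by
    rw [Real.exp_eq_exp_ℝ]
    exact NormedSpace.expSeries_div_hasSum_exp r
  refine hasSum_le (fun n => ?_) ((hasSum_nat_add_iff' N).2 exp_series)
    (exp_series.mul_left (r ^ N / N.factorial))
  have factorial_le : (N.factorial * n.factorial : ℝ) ≤ (n + N).factorial := by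
    rw [add_comm n N]
    exact_mod_cast Nat.le_of_dvd (Nat.factorial_pos _)
      (Nat.factorial_mul_factorial_dvd_factorial_add N n)
  rw [div_mul_div_comm, ← pow_add, add_comm N n]
  gcongr

/-- The algebra of continuous functions on `ℝ` of at most exponential growth. It contains the
polynomials and the exponentials `x ↦ exp (z * x)`, and its elements are integrable against
Gaussian weights. -/
def expGrowth : Subalgebra ℂ (ℝ → ℂ) where
  carrier := {f | Continuous f ∧ ∃ A : ℝ, f =O[⊤] fun x => exp (A * |x|)}
  mul_mem' := by
    rintro f g ⟨hf, A, hfA⟩ ⟨hg, B, hgB⟩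
    refine ⟨hf.mul hg, A + B, (hfA.mul hgB).congr_right fun x => ?_⟩
    rw [add_mul, exp_add]
  add_mem' := by
    rintro f g ⟨hf, A, hfA⟩ ⟨hg, B, hgB⟩
    have exp_mono {a b : ℝ} (hab : a ≤ b) :
        (fun x : ℝ => exp (a * |x|)) =O[⊤] fun x => exp (b * |x|) :=
      IsBigO.of_norm_le fun x => by
        rw [norm_of_nonneg (exp_nonneg _)]
        gcongr
    exact ⟨hf.add hg, max A B,
      (hfA.trans (exp_mono (le_max_left A B))).add (hgB.trans (exp_mono (le_max_right A B)))⟩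
  algebraMap_mem' z := by
    refine ⟨continuous_const, 0, IsBigO.of_bound ‖z‖ (Eventually.of_forall fun x => ?_)⟩
    simp

namespace expGrowth

lemma const_mem (z : ℂ) : (fun _ => z) ∈ expGrowth := expGrowth.algebraMap_mem z

lemma ofReal_mem : (fun x : ℝ => (x : ℂ)) ∈ expGrowth := by
  refine ⟨Complex.continuous_ofReal, 1, IsBigO.of_norm_le fun x => ?_⟩
  rw [Complex.norm_real, norm_eq_abs, one_mul]
  linarith [add_one_le_exp |x|]

lemma cexp_mul_mem (z : ℂ) : (fun x : ℝ => Complex.exp (z * x)) ∈ expGrowth := by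
  refine ⟨by fun_prop, ‖z‖, IsBigO.of_norm_le fun x => ?_⟩
  rw [Complex.norm_exp]
  gcongr
  simpa using Complex.re_le_norm (z * x)

lemma integrable_exp_neg_sq_mul {f : ℝ → ℂ} (hf : f ∈ expGrowth) :
    Integrable fun x => (exp (-x ^ 2) : ℂ) * f x := by
  obtain ⟨hf_cont, A, hfA⟩ := hf
  have complete_square :
      (fun x : ℝ => exp (-x ^ 2) * exp (A * |x|)) =O[⊤] fun x => exp (-(1 / 2) * x ^ 2) := by
    refine IsBigO.of_bound (exp (A ^ 2 / 2)) (Eventually.of_forall fun x => ?_)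
    rw [norm_of_nonneg (by positivity), norm_of_nonneg (exp_nonneg _), ← exp_add, ← exp_add]
    refine exp_le_exp.2 ?_
    nlinarith [sq_nonneg (A - |x|), sq_abs x]
  have weight_bound : (fun x : ℝ => (exp (-x ^ 2) : ℂ)) =O[⊤] fun x => exp (-x ^ 2) :=
    IsBigO.of_norm_le fun x => by rw [Complex.norm_real, norm_of_nonneg (exp_nonneg _)]
  exact ((weight_bound.mul hfA).trans complete_square).integrable
    (by fun_prop) (integrable_exp_neg_mul_sq one_half_pos)

end expGrowth

lemma physHermite_succ (n : ℕ) (x : ℝ) :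
    physHermite (n + 1) x = 2 * x * physHermite n x - 2 * n * physHermite (n - 1) x := by
  cases n <;> simp [physHermite]

lemma hasDerivAt_physHermite (n : ℕ) (x : ℝ) :
    HasDerivAt (physHermite n) (2 * n * physHermite (n - 1) x) x := by
  induction n using Nat.twoStepInduction with
  | zero => simpa [physHermite] using hasDerivAt_const x (1 : ℝ)
  | one => simpa [physHermite] using (hasDerivAt_id x).const_mul 2
  | more n deriv_n deriv_succ =>
    have deriv_rec := (((hasDerivAt_id x).const_mul 2).mul deriv_succ).sub
      (deriv_n.const_mul (2 * ((n : ℝ) + 1)))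
    refine deriv_rec.congr_deriv ?_
    simp only [id_eq, Nat.add_one_sub_one, physHermite_succ n x]
    push_cast
    ring

lemma physHermite_mem_expGrowth (n : ℕ) : (fun x => (physHermite n x : ℂ)) ∈ expGrowth := by
  have two_mul_mem := expGrowth.mul_mem (expGrowth.const_mem 2) expGrowth.ofReal_mem
  induction n using Nat.twoStepInduction with
  | zero => simpa [physHermite] using expGrowth.const_mem 1
  | one => simpa [physHermite, Pi.mul_def] using two_mul_mem
  | more n mem_n mem_succ =>
    convert! expGrowth.sub_mem (expGrowth.mul_mem two_mul_mem mem_succ)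
      (expGrowth.mul_mem (expGrowth.const_mem (2 * (n + 1))) mem_n) using 1
    ext x
    simp [physHermite]

/-- The Hermite polynomial against its orthogonality weight, `e^{-x²} Hₙ(x)`. By the Rodrigues
formula this is `(-1)ⁿ` times the `n`-th derivative of `e^{-x²}`. -/
def gaussHermite (n : ℕ) (x : ℝ) : ℝ := exp (-x ^ 2) * physHermite n x

namespace gaussHermite

lemma hasDerivAt (n : ℕ) (x : ℝ) :
    HasDerivAt (gaussHermite n) (-gaussHermite (n + 1) x) x := by
  have gaussian_deriv : HasDerivAt (fun x : ℝ => exp (-x ^ 2)) (exp (-x ^ 2) * (-(2 * x))) x := by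
    simpa using (hasDerivAt_pow 2 x).neg.exp
  refine (gaussian_deriv.mul (hasDerivAt_physHermite n x)).congr_deriv ?_
  rw [gaussHermite, physHermite_succ]
  ring

lemma integrable_mul (n : ℕ) {f : ℝ → ℂ} (hf : f ∈ expGrowth) :
    Integrable fun x => (gaussHermite n x : ℂ) * f x := by
  refine (expGrowth.integrable_exp_neg_sq_mul
    (expGrowth.mul_mem (physHermite_mem_expGrowth n) hf)).congr (ae_of_all _ fun x => ?_)
  simp [gaussHermite, mul_assoc]

lemma integral_succ_mul (n : ℕ) {F F' : ℝ → ℂ} (hderiv : ∀ x, HasDerivAt F (F' x) x)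
    (hF : F ∈ expGrowth) (hF' : F' ∈ expGrowth) :
    ∫ x, (gaussHermite (n + 1) x : ℂ) * F x = ∫ x, (gaussHermite n x : ℂ) * F' x := by
  have integration_by_parts := integral_mul_deriv_eq_deriv_mul_of_integrable
    (fun x _ => (hasDerivAt n x).ofReal_comp) (fun x _ => hderiv x) (integrable_mul n hF')
    (by simpa [Pi.mul_def] using (integrable_mul (n + 1) hF).neg) (integrable_mul n hF)
  simpa [integral_neg] using integration_by_parts.symm

lemma integral_mul_eq_integral_zero_mul {F : ℕ → ℝ → ℂ}
    (hderiv : ∀ j x, HasDerivAt (F j) (F (j + 1) x) x) (hF : ∀ j, F j ∈ expGrowth) (n : ℕ) :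
    ∫ x, (gaussHermite n x : ℂ) * F 0 x = ∫ x, (gaussHermite 0 x : ℂ) * F n x := by
  induction n generalizing F with
  | zero => rfl
  | succ n ih =>
    rw [integral_succ_mul n (hderiv 0) (hF 0) (hF 1)]
    exact ih (F := fun j => F (j + 1)) (fun j => hderiv (j + 1)) fun j => hF (j + 1)

lemma integral_zero_mul_cexp (z : ℂ) :
    ∫ x : ℝ, (gaussHermite 0 x : ℂ) * Complex.exp (z * x) = √π * Complex.exp (z ^ 2 / 4) := by
  have gaussian_integral := integral_cexp_quadratic (b := -1) (by simp) z 0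
  convert! gaussian_integral using 2
  · ext x
    simp [gaussHermite, physHermite, ← Complex.exp_add, add_comm]
  · rw [sqrt_eq_rpow, Complex.ofReal_cpow pi_pos.le]
    simp
  · ring_nf

lemma integral_zero : ∫ x, (gaussHermite 0 x : ℂ) = √π := by
  simpa using integral_zero_mul_cexp 0

lemma integral_mul_cexp (n : ℕ) (z : ℂ) :
    ∫ x : ℝ, (gaussHermite n x : ℂ) * Complex.exp (z * x)
      = z ^ n * (√π * Complex.exp (z ^ 2 / 4)) := by
  have exp_deriv (j : ℕ) (x : ℝ) : HasDerivAt (fun x : ℝ => z ^ j * Complex.exp (z * x))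
      (z ^ (j + 1) * Complex.exp (z * x)) x := by
    refine ((((hasDerivAt_id x).ofReal_comp).const_mul z).cexp.const_mul (z ^ j)).congr_deriv ?_
    rw [Complex.ofReal_one, mul_one, pow_succ, mul_assoc, mul_comm (Complex.exp _)]
    rfl
  have iterated := integral_mul_eq_integral_zero_mul exp_deriv
    (fun j => expGrowth.mul_mem (expGrowth.const_mem (z ^ j)) (expGrowth.cexp_mul_mem z)) n
  simp only [pow_zero, one_mul] at iterated
  rw [iterated, ← integral_zero_mul_cexp, ← integral_const_mul]
  exact integral_congr_ae (ae_of_all _ fun x => by ring)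

lemma integral_mul_physHermite (n m : ℕ) :
    ∫ x, (gaussHermite n x : ℂ) * physHermite m x
      = 2 ^ n * m.descFactorial n * ∫ x, (gaussHermite 0 x : ℂ) * physHermite (m - n) x := by
  have hermite_deriv (j : ℕ) (x : ℝ) :
      HasDerivAt (fun x => (2 ^ j * m.descFactorial j * physHermite (m - j) x : ℂ))
        (2 ^ (j + 1) * m.descFactorial (j + 1) * physHermite (m - (j + 1)) x) x := by
    refine ((hasDerivAt_physHermite (m - j) x).ofReal_comp.const_mul _).congr_deriv ?_
    rw [Nat.descFactorial_succ, Nat.sub_sub]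
    push_cast
    ring
  have iterated := integral_mul_eq_integral_zero_mul hermite_deriv
    (fun j => expGrowth.mul_mem (expGrowth.const_mem _) (physHermite_mem_expGrowth (m - j))) n
  simp only [pow_zero, Nat.descFactorial_zero, Nat.cast_one, one_mul, Nat.sub_zero] at iterated
  rw [iterated, ← integral_const_mul]
  exact integral_congr_ae (ae_of_all _ fun x => by ring)

lemma integral_mul_physHermite_self (n : ℕ) :
    ∫ x, (gaussHermite n x : ℂ) * physHermite n x = √π * (2 ^ n * n.factorial) := by
  rw [integral_mul_physHermite, Nat.descFactorial_self, Nat.sub_self]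
  simp only [physHermite, Complex.ofReal_one, mul_one, integral_zero]
  ring

lemma integral_mul_physHermite_of_lt {n m : ℕ} (h : m < n) :
    ∫ x, (gaussHermite n x : ℂ) * physHermite m x = 0 := by
  rw [integral_mul_physHermite, Nat.descFactorial_of_lt h]
  simp

end gaussHermite

/-- The factor `π^{-1/4} (2ⁿ n!)^{-1/2}` that normalizes the Hermite function `hermiteFun n`. -/
def hermiteNormConst (n : ℕ) : ℝ := (√√π)⁻¹ * (√(2 ^ n * n.factorial))⁻¹

lemma hermiteNormConst_sq (n : ℕ) : hermiteNormConst n ^ 2 = (√π * (2 ^ n * n.factorial))⁻¹ := by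
  rw [hermiteNormConst, mul_pow, inv_pow, inv_pow, sq_sqrt (sqrt_nonneg π), sq_sqrt (by positivity),
    ← mul_inv]

lemma hermiteFun_mul_hermiteFun (n m : ℕ) (x : ℝ) :
    hermiteFun n x * hermiteFun m x
      = hermiteNormConst n * hermiteNormConst m * (gaussHermite n x * physHermite m x) := by
  have gaussian_split : exp (-x ^ 2) = exp (-x ^ 2 / 2) * exp (-x ^ 2 / 2) := by
    rw [← exp_add, add_halves]
  simp only [hermiteFun, hermiteNormConst, gaussHermite, gaussian_split]
  ring

lemma integral_hermiteFun_mul_self (n : ℕ) : ∫ x, hermiteFun n x * hermiteFun n x = 1 := by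
  have polynomial_norm : ∫ x, gaussHermite n x * physHermite n x = √π * (2 ^ n * n.factorial) := by
    have := gaussHermite.integral_mul_physHermite_self n
    simp only [← Complex.ofReal_mul, integral_complex_ofReal] at this
    exact_mod_cast this
  simp only [hermiteFun_mul_hermiteFun, integral_const_mul, polynomial_norm]
  rw [← sq, hermiteNormConst_sq, inv_mul_cancel₀ (by positivity)]

lemma integral_hermiteFun_mul_of_lt {n m : ℕ} (h : m < n) :
    ∫ x, hermiteFun n x * hermiteFun m x = 0 := by
  have polynomials_orthogonal : ∫ x, gaussHermite n x * physHermite m x = 0 := by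
    have := gaussHermite.integral_mul_physHermite_of_lt h
    simp only [← Complex.ofReal_mul, integral_complex_ofReal] at this
    exact_mod_cast this
  simp only [hermiteFun_mul_hermiteFun, integral_const_mul, polynomials_orthogonal, mul_zero]

lemma integral_hermiteFun_mul_hermiteFun (n m : ℕ) :
    ∫ x, hermiteFun n x * hermiteFun m x = if n = m then 1 else 0 := by
  rcases lt_trichotomy n m with h | rfl | h
  · simp only [mul_comm (hermiteFun n _), integral_hermiteFun_mul_of_lt h, if_neg h.ne]
  · rw [integral_hermiteFun_mul_self, if_pos rfl]
  · rw [integral_hermiteFun_mul_of_lt h, if_neg h.ne']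

lemma integrable_hermiteFun_sq (n : ℕ) : Integrable fun x => hermiteFun n x ^ 2 := by
  have weighted : Integrable fun x => gaussHermite n x * physHermite n x := by
    simpa [← Complex.ofReal_mul] using
      (gaussHermite.integrable_mul n (physHermite_mem_expGrowth n)).re
  simpa only [sq, hermiteFun_mul_hermiteFun] using weighted.const_mul _

lemma continuous_hermiteFun (n : ℕ) : Continuous (hermiteFun n) := by
  have : Continuous (physHermite n) :=
    continuous_iff_continuousAt.2 fun x => (hasDerivAt_physHermite n x).continuousAt
  unfold hermiteFun
  fun_prop

lemma memLp_scaledHermite {β : ℝ} (hβ : 0 < β) (n : ℕ) :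
    MemLp (fun x => (scaledHermite β n x : ℂ)) 2 := by
  have hcont : Continuous (scaledHermite β n) := by
    have := continuous_hermiteFun n
    unfold scaledHermite
    fun_prop
  refine MemLp.ofReal ((memLp_two_iff_integrable_sq hcont.aestronglyMeasurable).2 ?_)
  simpa only [scaledHermite, mul_pow] using
    ((integrable_hermiteFun_sq n).comp_mul_left' hβ.ne').const_mul (√β ^ 2)

lemma integral_scaledHermite_mul_scaledHermite {β : ℝ} (hβ : 0 < β) (n m : ℕ) :
    ∫ x, scaledHermite β n x * scaledHermite β m x = if n = m then 1 else 0 := by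
  have pull_scale (x : ℝ) : scaledHermite β n x * scaledHermite β m x
      = β * (hermiteFun n (β * x) * hermiteFun m (β * x)) := by
    rw [scaledHermite, scaledHermite, mul_mul_mul_comm, mul_self_sqrt hβ.le]
  simp only [pull_scale, integral_const_mul]
  rw [Measure.integral_comp_mul_left (fun y => hermiteFun n y * hermiteFun m y) β,
    integral_hermiteFun_mul_hermiteFun, abs_of_pos (inv_pos.2 hβ), smul_eq_mul,
    mul_inv_cancel_left₀ hβ.ne']

lemma orthonormal_scaledHermite {β : ℝ} (hβ : 0 < β) :
    Orthonormal ℂ fun n => (memLp_scaledHermite hβ n).toLp := by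
  refine orthonormal_iff_ite.2 fun n m => ?_
  simp only [inner_toLp_two, RCLike.inner_apply, Complex.conj_ofReal, ← Complex.ofReal_mul]
  rw [integral_complex_ofReal, integral_scaledHermite_mul_scaledHermite hβ]
  simp only [eq_comm (a := m)]
  split_ifs <;> simp

lemma integral_norm_sub_hermiteProj_sq {β : ℝ} (hβ : 0 < β) {u : ℝ → ℂ} (hu : MemLp u 2) (N : ℕ) :
    ∫ x, ‖u x - hermiteProj β N u x‖ ^ 2
      = (∫ x, ‖u x‖ ^ 2) - ∑ n ∈ Finset.range (N + 1), ‖∫ y, u y * scaledHermite β n y‖ ^ 2 := by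
  simpa [hermiteProj] using integral_norm_sub_sum_integral_inner_smul_sq
    (memLp_scaledHermite hβ) (orthonormal_scaledHermite hβ) hu (Finset.range (N + 1))

section gks

variable (k s : ℝ)

lemma norm_gks_sq (x : ℝ) : ‖gks k s x‖ ^ 2 = exp (-1 * (x - s) ^ 2) := by
  have exponent_re : (-((x : ℂ) - s) ^ 2 / 2 + Complex.I * k * x).re = -(x - s) ^ 2 / 2 := by
    rw [← Complex.ofReal_sub, ← Complex.ofReal_pow]
    simp [-Complex.ofReal_sub, -Complex.ofReal_pow]
  rw [gks, Complex.norm_exp, exponent_re, ← exp_nat_mul]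
  congr 1
  push_cast
  ring

lemma integral_norm_gks_sq : ∫ x, ‖gks k s x‖ ^ 2 = √π := by
  simp only [norm_gks_sq]
  rw [integral_sub_right_eq_self (fun x => exp (-1 * x ^ 2)) s, integral_gaussian, div_one]

lemma memLp_gks : MemLp (gks k s) 2 := by
  have hcont : Continuous (gks k s) := by
    unfold gks
    fun_prop
  refine (memLp_two_iff_integrable_sq_norm hcont.aestronglyMeasurable).2 ?_
  simpa only [norm_gks_sq] using (integrable_exp_neg_mul_sq one_pos).comp_sub_right s

lemma gks_mul_scaledHermite_one (n : ℕ) (x : ℝ) :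
    gks k s x * scaledHermite 1 n x
      = (hermiteNormConst n * exp (-s ^ 2 / 2) : ℝ)
        * (gaussHermite n x * Complex.exp ((s + k * Complex.I) * x)) := by
  have exponents : Complex.exp (-((x : ℂ) - s) ^ 2 / 2 + Complex.I * k * x)
        * Complex.exp (-(x : ℂ) ^ 2 / 2)
      = Complex.exp (-(s : ℂ) ^ 2 / 2) * Complex.exp (-(x : ℂ) ^ 2)
        * Complex.exp ((s + k * Complex.I) * x) := by
    simp only [← Complex.exp_add]
    ring_nf
  simp only [gks, scaledHermite, hermiteFun, hermiteNormConst, gaussHermite, sqrt_one, one_mul]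
  push_cast
  linear_combination ((√√π : ℂ)⁻¹ * (√(2 ^ n * n.factorial) : ℂ)⁻¹ * physHermite n x) * exponents

lemma integral_gks_mul_scaledHermite_one (n : ℕ) :
    ∫ x, gks k s x * scaledHermite 1 n x
      = (hermiteNormConst n * exp (-s ^ 2 / 2) * √π : ℝ)
        * ((s + k * Complex.I) ^ n * Complex.exp ((s + k * Complex.I) ^ 2 / 4)) := by
  simp only [gks_mul_scaledHermite_one, integral_const_mul, gaussHermite.integral_mul_cexp]
  push_cast
  ring

lemma norm_cexp_sq_div_four_sq :
    ‖Complex.exp ((s + k * Complex.I) ^ 2 / 4)‖ ^ 2 = exp ((s ^ 2 - k ^ 2) / 2) := by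
  have re_sq : (((s : ℂ) + k * Complex.I) ^ 2 / 4).re = (s ^ 2 - k ^ 2) / 4 := by
    simp [sq]
  rw [Complex.norm_exp, re_sq, ← exp_nat_mul]
  congr 1
  push_cast
  ring

lemma norm_integral_gks_mul_scaledHermite_one_sq (n : ℕ) :
    ‖∫ x, gks k s x * scaledHermite 1 n x‖ ^ 2
      = √π * (exp (-((k ^ 2 + s ^ 2) / 2)) * (((k ^ 2 + s ^ 2) / 2) ^ n / n.factorial)) := by
  have norm_sq : ‖(s : ℂ) + k * Complex.I‖ ^ 2 = k ^ 2 + s ^ 2 := by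
    rw [← Complex.normSq_eq_norm_sq, Complex.normSq_add_mul_I, add_comm]
  have exponents : exp (-s ^ 2 / 2) ^ 2 * exp ((s ^ 2 - k ^ 2) / 2)
      = exp (-((k ^ 2 + s ^ 2) / 2)) := by
    rw [← exp_nat_mul, ← exp_add]
    congr 1
    push_cast
    ring
  have hpi : √π ≠ 0 := by positivity
  rw [integral_gks_mul_scaledHermite_one, norm_mul, norm_mul, norm_pow, mul_pow, mul_pow,
    norm_cexp_sq_div_four_sq, pow_right_comm, norm_sq, Complex.norm_real, norm_eq_abs, sq_abs,
    mul_pow, mul_pow, hermiteNormConst_sq, ← exponents, div_pow]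
  field_simp

lemma integral_norm_gks_sub_hermiteProj_sq (N : ℕ) :
    ∫ x, ‖gks k s x - hermiteProj 1 N (gks k s) x‖ ^ 2
      = √π * (exp (-((k ^ 2 + s ^ 2) / 2)) * (exp ((k ^ 2 + s ^ 2) / 2)
        - ∑ n ∈ Finset.range (N + 1), ((k ^ 2 + s ^ 2) / 2) ^ n / n.factorial)) := by
  rw [integral_norm_sub_hermiteProj_sq one_pos (memLp_gks k s), integral_norm_gks_sq]
  simp only [norm_integral_gks_mul_scaledHermite_one_sq, ← Finset.mul_sum]
  rw [mul_sub (exp _), ← exp_add, neg_add_cancel, exp_zero]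
  ring

lemma integral_norm_gks_sub_hermiteProj_sq_le (N : ℕ) :
    ∫ x, ‖gks k s x - hermiteProj 1 N (gks k s) x‖ ^ 2
      ≤ √π * (((k ^ 2 + s ^ 2) / 2) ^ (N + 1) / (N + 1).factorial) := by
  rw [integral_norm_gks_sub_hermiteProj_sq]
  set r := (k ^ 2 + s ^ 2) / 2
  have hr : 0 ≤ r := by positivity
  gcongr
  calc exp (-r) * (exp r - ∑ n ∈ Finset.range (N + 1), r ^ n / n.factorial)
      ≤ exp (-r) * (r ^ (N + 1) / (N + 1).factorial * exp r) := by
        gcongr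
        exact exp_sub_sum_range_le hr (N + 1)
    _ = r ^ (N + 1) / (N + 1).factorial := by
        rw [mul_left_comm, ← exp_add, neg_add_cancel, exp_zero, mul_one]

end gks

/-- `‖g_{k,s} − Π̂_N g_{k,s}‖ ≤ C (N+1)!^{-1/2} ((k²+s²)/2)^{(N+1)/2}`. -/
theorem gks_proj_error :
    ∃ C : ℝ, 0 < C ∧ ∀ k s : ℝ, ∀ N : ℕ,
      L2norm (fun x => gks k s x - hermiteProj 1 N (gks k s) x)
        ≤ C * (Real.sqrt (Nat.factorial (N + 1)))⁻¹ *
            (((k ^ 2 + s ^ 2) / 2) ^ (((N : ℝ) + 1) / 2)) := by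
  refine ⟨√√π, by positivity, fun k s N => ?_⟩
  have hr : 0 ≤ (k ^ 2 + s ^ 2) / 2 := by positivity
  have sqrt_pow : √(((k ^ 2 + s ^ 2) / 2) ^ (N + 1))
      = ((k ^ 2 + s ^ 2) / 2) ^ (((N : ℝ) + 1) / 2) := by
    rw [sqrt_eq_rpow, ← rpow_natCast_mul hr, Nat.cast_succ, mul_one_div]
  calc L2norm (fun x => gks k s x - hermiteProj 1 N (gks k s) x)
      ≤ √(√π * (((k ^ 2 + s ^ 2) / 2) ^ (N + 1) / (N + 1).factorial)) :=
        sqrt_le_sqrt (integral_norm_gks_sub_hermiteProj_sq_le k s N)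
    _ = √√π * (√((N + 1).factorial))⁻¹ * ((k ^ 2 + s ^ 2) / 2) ^ (((N : ℝ) + 1) / 2) := by
        rw [sqrt_mul (sqrt_nonneg π), sqrt_div (by positivity), sqrt_pow]
        ring
end
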